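/- For every real k > 0, the integral ∫₀^∞ sin(k·t)/(e^t − 1) dt converges and equals (π·coth(π·k))/2 − 1/(2k). -/

import Mathlib

open MeasureTheory Real

/-- The real hyperbolic cotangent. -/
noncomputable def coth (x : ℝ) : ℝ := Real.cosh x / Real.sinh x

/-! Expand `1 / (eᵗ - 1) = ∑ₙ e^{-(n+1)t}` and integrate term by term. The Laplace transform of
the sine turns the integral into `∑ₙ k / ((n + 1)² + k²)`, which is, up to a constant factor, the
Mittag-Leffler series of `π cot (π z) - 1 / z` at `z = i k`. -/

open Set

lemma div_sinh_le_one (x : ℝ) : x / sinh x ≤ 1 := by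
  rcases le_total 0 x with hx | hx
  · exact div_le_one_of_le₀ (self_le_sinh_iff.mpr hx) (sinh_nonneg_iff.mpr hx)
  · exact div_le_one_of_ge (sinh_le_self_iff.mpr hx) (sinh_nonpos_iff.mpr hx)

lemma exp_sub_one_eq_two_mul_exp_half_mul_sinh_half (t : ℝ) :
    exp t - 1 = 2 * exp (t / 2) * sinh (t / 2) := by
  have hsq : exp t = exp (t / 2) * exp (t / 2) := by rw [← exp_add, add_halves]
  rw [sinh_eq, exp_neg, hsq]
  field

lemma div_exp_sub_one_le_exp_neg_half (t : ℝ) : t / (exp t - 1) ≤ exp (-(t / 2)) :=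
  calc t / (exp t - 1) = exp (-(t / 2)) * (t / 2 / sinh (t / 2)) := by
        rw [exp_sub_one_eq_two_mul_exp_half_mul_sinh_half, exp_neg]
        field
    _ ≤ exp (-(t / 2)) := mul_le_of_le_one_right (exp_pos _).le (div_sinh_le_one _)

lemma integrableOn_div_exp_sub_one :
    IntegrableOn (fun t : ℝ => t / (exp t - 1)) (Ioi 0) := by
  refine (integrableOn_exp_mul_Ioi (a := -(1 / 2)) (by norm_num) 0).mono'
    (Measurable.aestronglyMeasurable (by fun_prop)) ?_
  filter_upwards [ae_restrict_mem measurableSet_Ioi] with t ht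
  have hnonneg : 0 ≤ t / (exp t - 1) :=
    div_nonneg (mem_Ioi.mp ht).le (sub_nonneg.mpr (one_le_exp (mem_Ioi.mp ht).le))
  rw [norm_of_nonneg hnonneg, neg_mul, one_div_mul_eq_div]
  exact div_exp_sub_one_le_exp_neg_half t

lemma integrableOn_sin_div_exp_sub_one (k : ℝ) :
    IntegrableOn (fun t => sin (k * t) / (exp t - 1)) (Ioi 0) := by
  refine (integrableOn_div_exp_sub_one.norm.const_mul |k|).mono'
    (Measurable.aestronglyMeasurable (by fun_prop)) (.of_forall fun t => ?_)
  rw [norm_div, norm_div, ← mul_div_assoc, norm_eq_abs t, ← abs_mul]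
  gcongr
  exact abs_sin_le_abs

lemma hasSum_exp_neg_succ_mul {t : ℝ} (ht : 0 < t) :
    HasSum (fun n : ℕ => exp (-(n + 1) * t)) (exp t - 1)⁻¹ := by
  have hgeom := (hasSum_geometric_of_lt_one (exp_pos (-t)).le
    (exp_lt_one_iff.mpr (neg_lt_zero.mpr ht))).mul_left (exp (-t))
  have hterm (n : ℕ) : exp (-t) * exp (-t) ^ n = exp (-(n + 1) * t) := by
    rw [← exp_nat_mul, ← exp_add]
    ring_nf
  have hvalue : exp (-t) * (1 - exp (-t))⁻¹ = (exp t - 1)⁻¹ := by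
    rw [exp_neg, ← mul_inv, mul_sub, mul_one, mul_inv_cancel₀ (exp_ne_zero t)]
  simpa only [hterm, hvalue] using hgeom

lemma hasSum_setIntegral_exp_neg_succ_mul_smul {E : Type*} [NormedAddCommGroup E] [NormedSpace ℝ E]
    {μ : Measure ℝ} {f : ℝ → E} (hf : IntegrableOn (fun t => (exp t - 1)⁻¹ • f t) (Ioi 0) μ) :
    HasSum (fun n : ℕ => ∫ t in Ioi 0, exp (-(n + 1) * t) • f t ∂μ)
      (∫ t in Ioi 0, (exp t - 1)⁻¹ • f t ∂μ) := by
  have hpos : ∀ᵐ t ∂μ.restrict (Ioi 0), 0 < t := ae_restrict_mem measurableSet_Ioi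
  have hmeas : AEStronglyMeasurable f (μ.restrict (Ioi 0)) := by
    have hexp : AEStronglyMeasurable (fun t => exp t - 1) (μ.restrict (Ioi 0)) := by fun_prop
    refine (hexp.smul hf.aestronglyMeasurable).congr ?_
    filter_upwards [hpos] with t ht
    exact smul_inv_smul₀ (sub_pos.mpr (one_lt_exp_iff.mpr ht)).ne' (f t)
  -- The norms of the terms sum to the norm of the limit, so `hf` alone justifies the interchange.
  refine hasSum_integral_of_dominated_convergence (fun n t => exp (-(n + 1) * t) * ‖f t‖)
    (fun n => .smul (by fun_prop) hmeas)
    (fun n => .of_forall fun t => by rw [norm_smul, norm_of_nonneg (exp_pos _).le]) ?_ ?_ ?_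
  · filter_upwards [hpos] with t ht
    exact (hasSum_exp_neg_succ_mul ht).summable.mul_right _
  · refine hf.norm.congr ?_
    filter_upwards [hpos] with t ht
    have hnonneg : 0 ≤ (exp t - 1)⁻¹ := inv_nonneg.mpr (sub_nonneg.mpr (one_le_exp ht.le))
    rw [((hasSum_exp_neg_succ_mul ht).mul_right _).tsum_eq, norm_smul, norm_of_nonneg hnonneg]
  · filter_upwards [hpos] with t ht
    exact (hasSum_exp_neg_succ_mul ht).smul_const _

lemma integral_exp_neg_mul_mul_sin (k : ℝ) {b : ℝ} (hb : 0 < b) :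
    ∫ t in Ioi (0 : ℝ), exp (-b * t) * sin (k * t) = k / (b ^ 2 + k ^ 2) := by
  have hre : (⟨-b, k⟩ : ℂ).re < 0 := neg_lt_zero.mpr hb
  calc ∫ t in Ioi (0 : ℝ), exp (-b * t) * sin (k * t)
      = ∫ t in Ioi (0 : ℝ), (Complex.exp (⟨-b, k⟩ * t)).im := by
        simp only [Complex.exp_im, Complex.re_mul_ofReal, Complex.im_mul_ofReal]
    _ = (∫ t in Ioi (0 : ℝ), Complex.exp (⟨-b, k⟩ * t)).im :=
        integral_im (integrableOn_exp_mul_complex_Ioi hre 0)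
    _ = k / (b ^ 2 + k ^ 2) := by
        rw [integral_exp_mul_complex_Ioi hre]
        simp [Complex.normSq_apply, pow_two, neg_div]

lemma tsum_two_mul_div_succ_sq_add_sq {z : ℂ} (hz : z * Complex.I ∈ Complex.integerComplement) :
    ∑' n : ℕ, 2 * z / ((n + 1) ^ 2 + z ^ 2) =
      π * (Complex.cosh (π * z) / Complex.sinh (π * z)) - 1 / z := by
  have hterm (n : ℕ) : 1 / (z * Complex.I - (n + 1)) + 1 / (z * Complex.I + (n + 1)) =
      -Complex.I * (2 * z / ((n + 1) ^ 2 + z ^ 2)) := by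
    have hsub : z * Complex.I - (n + 1) ≠ 0 := by
      simpa [sub_eq_add_neg] using Complex.integerComplement_add_ne_zero hz (-(n + 1))
    have hadd : z * Complex.I + (n + 1) ≠ 0 := by
      simpa using Complex.integerComplement_add_ne_zero hz (n + 1)
    have hfactor : (n + 1) ^ 2 + z ^ 2 =
        -((z * Complex.I - (n + 1)) * (z * Complex.I + (n + 1))) := by
      linear_combination z ^ 2 * Complex.I_sq
    rw [hfactor]
    field
  have hcot : π * Complex.cot (π * (z * Complex.I)) - 1 / (z * Complex.I) =
      -Complex.I * (π * (Complex.cosh (π * z) / Complex.sinh (π * z)) - 1 / z) := by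
    rw [Complex.cot_eq_cos_div_sin, ← mul_assoc, Complex.cos_mul_I, Complex.sin_mul_I,
      ← div_div, ← div_div, Complex.div_I, Complex.div_I]
    ring
  have hseries := cot_series_rep' hz
  simp_rw [hterm, tsum_mul_left, hcot] at hseries
  exact (mul_left_cancel₀ (neg_ne_zero.mpr Complex.I_ne_zero) hseries).symm

lemma tsum_div_succ_sq_add_sq {k : ℝ} (hk : k ≠ 0) :
    ∑' n : ℕ, k / ((n + 1 : ℝ) ^ 2 + k ^ 2) = π * coth (π * k) / 2 - 1 / (2 * k) := by
  have hz : (k : ℂ) * Complex.I ∈ Complex.integerComplement := by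
    rintro ⟨n, hn⟩
    exact hk (by simpa using (congrArg Complex.im hn).symm)
  have hdouble : ∑' n : ℕ, 2 * k / ((n + 1 : ℝ) ^ 2 + k ^ 2) = π * coth (π * k) - 1 / k := by
    unfold coth
    exact_mod_cast tsum_two_mul_div_succ_sq_add_sq hz
  simp_rw [mul_div_assoc, tsum_mul_left] at hdouble
  linear_combination hdouble / 2

theorem integral_sin_div_exp_sub_one_general {k : ℝ} (hk : k ≠ 0) :
    IntegrableOn (fun t => sin (k * t) / (exp t - 1)) (Ioi 0) ∧
      ∫ t in Ioi (0 : ℝ), sin (k * t) / (exp t - 1) = π * coth (π * k) / 2 - 1 / (2 * k) := by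
  refine ⟨integrableOn_sin_div_exp_sub_one k, ?_⟩
  have hint := integrableOn_sin_div_exp_sub_one k
  simp only [div_eq_inv_mul (sin _)] at hint ⊢
  calc ∫ t in Ioi (0 : ℝ), (exp t - 1)⁻¹ * sin (k * t)
      = ∑' n : ℕ, ∫ t in Ioi (0 : ℝ), exp (-(n + 1) * t) * sin (k * t) :=
        (hasSum_setIntegral_exp_neg_succ_mul_smul hint).tsum_eq.symm
    _ = ∑' n : ℕ, k / ((n + 1 : ℝ) ^ 2 + k ^ 2) :=
        tsum_congr fun n => integral_exp_neg_mul_mul_sin k n.cast_add_one_pos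
    _ = π * coth (π * k) / 2 - 1 / (2 * k) := tsum_div_succ_sq_add_sq hk

/-- For every real `k > 0`, the integral `∫₀^∞ sin(k t)/(e^t − 1) dt` converges and equals
`π coth(π k)/2 − 1/(2k)`. -/
theorem integral_sin_div_exp_sub_one (k : ℝ) (hk : 0 < k) :
    IntegrableOn (fun t => Real.sin (k * t) / (Real.exp t - 1)) (Set.Ioi 0) ∧
      ∫ t in Set.Ioi (0 : ℝ), Real.sin (k * t) / (Real.exp t - 1) =
        π * coth (π * k) / 2 - 1 / (2 * k) :=
  integral_sin_div_exp_sub_one_general hk.ne'
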